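/- Let r > 0 and let X be an ℝ^d-valued random vector with E|X|^{r'} < ∞ for some r' > r, whose law has a non-zero absolutely continuous component with respect to Lebesgue measure on ℝ^d. Let (Γ_N)_{N≥1} be a sequence of L^r-optimal quantizers of X, i.e. card(Γ_N) ≤ N and e_r(Γ_N, X) = e_{r,N}(X) for every N ≥ 1. Then for every s ∈ (0, (d+r)r'/(d+r')) there exists a finite constant K̃_{d,r,r',s}, depending only on d, r, r' and s, such that for every N ≥ 1: e_s(Γ_N, X) ≤ K̃_{d,r,r',s} · σ_{r'}(X) · N^{−1/d}. -/

import Mathlib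

open MeasureTheory Real

noncomputable section

abbrev Euc (d : ℕ) : Type := EuclideanSpace ℝ (Fin d)

/-- L^p quantization error of a random vector `X` w.r.t. a grid `Γ`. -/
def quantErrRV (p : ℝ) {Ω : Type*} [MeasurableSpace Ω] (P : Measure Ω) {d : ℕ}
    (X : Ω → Euc d) (Γ : Finset (Euc d)) : ℝ :=
  (∫ ω, (Metric.infDist (X ω) (Γ : Set (Euc d))) ^ p ∂P) ^ (1 / p)

/-- Optimal L^p quantization error at level `N`. -/
def optQuantErrRV (p : ℝ) (N : ℕ) {Ω : Type*} [MeasurableSpace Ω] (P : Measure Ω) {d : ℕ}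
    (X : Ω → Euc d) : ℝ :=
  sInf {e | ∃ Γ : Finset (Euc d), Γ.Nonempty ∧ Γ.card ≤ N ∧ e = quantErrRV p P X Γ}

/-- `σ_p(X)`, the L^p pseudo-standard deviation. -/
def sigmaRV (p : ℝ) {Ω : Type*} [MeasurableSpace Ω] (P : Measure Ω) {d : ℕ}
    (X : Ω → Euc d) : ℝ :=
  ⨅ a : Euc d, (∫ ω, ‖X ω - a‖ ^ p ∂P) ^ (1 / p)

/-!
Write `D x` for the distance from `x` to the grid. Adding a point `y` to the grid lowers the `L^r`
distortion at least by a constant times `D y ^ r` times the mass of the ball of radius `D y / 4`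
about `y`. If no point lowers it by more than `η`, integrating this bound against the finite measure
`(1 + ‖y‖) ^ (-q) dy`, `q > d`, and exchanging the integrals bounds the mean of
`(1 + ‖x‖) ^ (-q) * D x ^ (d + r)` by a multiple of `η`. By Hölder's inequality and the moment of
order `r'`, the `L^s` distortion is then at most a multiple of `η ^ (s / (d + r))`; the range of `s`
is exactly what leaves room for a `q > d`.

Read with `s = r` this says that greedily adding points to `{0}` produces grids with distortion
`O(N ^ (-r / d))`, which is Pierce's lemma. For an optimal grid, replacing one of its points by `y`
is not an improvement; averaging over the points outside a subset that is comparable with a good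
grid at level `N / 2` shows that `η` is at most a multiple of `N⁻¹` times the distortion of the
latter, hence `O(N ^ (-(d + r) / d))`, and the `L^s` distortion is `O(N ^ (-s / d))`. An affine
change of variables normalizes the moment of order `r'`, which brings in the factor `σ_{r'}`.
-/

open Metric Module
open scoped ENNReal

section Rpow

lemma add_rpow_le_two_rpow_mul {x y p : ℝ} (hx : 0 ≤ x) (hy : 0 ≤ y) (hp : 0 ≤ p) :
    (x + y) ^ p ≤ 2 ^ p * (x ^ p + y ^ p) := by
  wlog hxy : x ≤ y generalizing x y
  · rw [add_comm x, add_comm (x ^ p)]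
    exact this hy hx (le_of_not_ge hxy)
  calc (x + y) ^ p ≤ (2 * y) ^ p := by gcongr; linarith
    _ = 2 ^ p * y ^ p := mul_rpow zero_le_two hy
    _ ≤ 2 ^ p * (x ^ p + y ^ p) := by gcongr; linarith [rpow_nonneg hx p]

lemma rpow_le_one_add_rpow {x p q : ℝ} (hx : 0 ≤ x) (hp : 0 ≤ p) (hpq : p ≤ q) :
    x ^ p ≤ 1 + x ^ q := by
  rcases le_total x 1 with h | h
  · linarith [rpow_le_one hx h hp, rpow_nonneg hx q]
  · linarith [rpow_le_rpow_of_exponent_le h hpq]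

lemma rpow_mul_one_add_mul_one_sub_le_one {u p : ℝ} (hu : 0 ≤ u) (hp : 0 ≤ p) :
    u ^ p * (1 + p * (1 - u)) ≤ 1 := by
  have hu_exp : u ^ p ≤ exp (p * (u - 1)) := by
    rw [mul_comm, exp_mul]
    exact rpow_le_rpow hu (by linarith [add_one_le_exp (u - 1)]) hp
  calc u ^ p * (1 + p * (1 - u)) ≤ u ^ p * exp (p * (1 - u)) := by
        gcongr
        linarith [add_one_le_exp (p * (1 - u))]
    _ ≤ exp (p * (u - 1)) * exp (p * (1 - u)) := by gcongr
    _ = 1 := by rw [← exp_add, ← exp_zero]; ring_nf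

lemma add_one_mul_rpow_le_of_rpow_one_add_le_mul_sub {a b t C p : ℝ} (hp : 0 < p) (ha : 0 ≤ a)
    (hb : 0 ≤ b) (hC : 0 < C) (hab : a ^ (1 + p) ≤ C * (a - b)) (ht : t * a ^ p ≤ C / p) :
    (t + 1) * b ^ p ≤ C / p := by
  rcases hb.eq_or_lt with rfl | hb
  · rw [zero_rpow hp.ne', mul_zero]
    positivity
  have hba : 0 ≤ a - b := nonneg_of_mul_nonneg_right ((rpow_nonneg ha _).trans hab) hC
  have ha : 0 < a := by linarith
  obtain ⟨u, hu, rfl⟩ : ∃ u, 0 ≤ u ∧ b = u * a :=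
    ⟨b / a, by positivity, (div_mul_cancel₀ b ha.ne').symm⟩
  have hap : a ^ p ≤ C * (1 - u) := by
    rw [rpow_add ha, rpow_one] at hab
    exact le_of_mul_le_mul_left (hab.trans_eq (by ring)) ha
  calc (t + 1) * (u * a) ^ p = u ^ p * (t * a ^ p + a ^ p) := by
        rw [mul_rpow hu ha.le]
        ring
    _ ≤ u ^ p * (C / p + C * (1 - u)) := by gcongr
    _ = C / p * (u ^ p * (1 + p * (1 - u))) := by field_simp
    _ ≤ C / p := mul_le_of_le_one_right (by positivity)
        (rpow_mul_one_add_mul_one_sub_le_one hu hp.le)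

end Rpow

section Metric

variable {α : Type*} [PseudoMetricSpace α]

lemma continuous_infDist_rpow {p : ℝ} (hp : 0 ≤ p) (s : Set α) :
    Continuous fun x => infDist x s ^ p :=
  (continuous_infDist_pt s).rpow_const fun _ => Or.inr hp

lemma exists_subset_infDist_le {Γ Δ : Finset α} (hΓ : Γ.Nonempty) (hΔ : Δ.Nonempty) :
    ∃ Γ' ⊆ Γ, Γ'.Nonempty ∧ Γ'.card ≤ Δ.card ∧
      ∀ x : α, infDist x Γ' ≤ 2 * infDist x Δ + infDist x Γ := by
  classical
  choose near near_mem infDist_eq using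
    Γ.finite_toSet.isCompact.exists_infDist_eq_dist (Finset.coe_nonempty.2 hΓ)
  refine ⟨Δ.image near, Finset.image_subset_iff.2 fun x _ => near_mem x, hΔ.image near,
    Finset.card_image_le, fun x => ?_⟩
  obtain ⟨g, hg, hgx⟩ :=
    Δ.finite_toSet.isCompact.exists_infDist_eq_dist (Finset.coe_nonempty.2 hΔ) x
  calc infDist x (Δ.image near) ≤ dist x (near g) :=
        infDist_le_dist_of_mem (Finset.mem_coe.2 (Finset.mem_image_of_mem near hg))
    _ ≤ dist x g + dist g (near g) := dist_triangle _ _ _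
    _ = dist x g + infDist g Γ := by rw [infDist_eq]
    _ ≤ dist x g + (infDist x Γ + dist g x) := by gcongr; exact infDist_le_infDist_add_dist
    _ = 2 * infDist x Δ + infDist x Γ := by rw [hgx, dist_comm g]; ring

/-- Only the point nearest to `x` matters: erasing any other point does not move `x` away from the
grid, and erasing that one still leaves `Γ'`. -/
lemma sum_infDist_insert_erase_rpow_le [DecidableEq α] {r : ℝ} (hr : 0 ≤ r) {Γ Γ' : Finset α}
    (hsub : Γ' ⊆ Γ) (hΓ' : Γ'.Nonempty) (x y : α) :
    ∑ a ∈ Γ \ Γ', infDist x (insert y (Γ.erase a) : Finset α) ^ r ≤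
      (Γ \ Γ').card * infDist x (insert y Γ : Finset α) ^ r + infDist x Γ' ^ r := by
  obtain ⟨b, hb, hbx⟩ := (insert y Γ).finite_toSet.isCompact.exists_infDist_eq_dist
    (Finset.coe_nonempty.2 (Finset.insert_nonempty y Γ)) x
  have hterm : ∀ a ∈ Γ \ Γ', infDist x (insert y (Γ.erase a) : Finset α) ^ r ≤
      infDist x (insert y Γ : Finset α) ^ r + if a = b then infDist x Γ' ^ r else 0 := by
    intro a ha
    split_ifs with hab
    · have hsub' : Γ' ⊆ insert y (Γ.erase a) :=
        (Finset.subset_erase.2 ⟨hsub, (Finset.mem_sdiff.1 ha).2⟩).trans (Finset.subset_insert _ _)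
      have := rpow_le_rpow infDist_nonneg (infDist_le_infDist_of_subset (x := x)
        (Finset.coe_subset.2 hsub') (Finset.coe_nonempty.2 hΓ')) hr
      linarith [rpow_nonneg (infDist_nonneg (x := x) (s := ↑(insert y Γ))) r]
    · have hb' : b ∈ insert y (Γ.erase a) := by
        simp only [Finset.coe_insert, Set.mem_insert_iff, Finset.mem_coe] at hb
        simp only [Finset.mem_insert, Finset.mem_erase]
        exact hb.imp_right fun hbΓ => ⟨Ne.symm hab, hbΓ⟩
      rw [add_zero, hbx]
      exact rpow_le_rpow infDist_nonneg (infDist_le_dist_of_mem (Finset.mem_coe.2 hb')) hr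
  calc _ ≤ ∑ a ∈ Γ \ Γ', (infDist x (insert y Γ : Finset α) ^ r +
        if a = b then infDist x Γ' ^ r else 0) := Finset.sum_le_sum hterm
    _ ≤ _ := by
      rw [Finset.sum_add_distrib, Finset.sum_const, nsmul_eq_mul, Finset.sum_ite_eq']
      gcongr
      split_ifs
      · exact le_rfl
      · exact rpow_nonneg infDist_nonneg r

end Metric

section Distortion

variable {α : Type*} [PseudoMetricSpace α] [MeasurableSpace α]

/-- The `p`-th power of the `L^p` quantization error of the distribution `μ` with respect to the
grid `Γ`. The empty grid has distortion `0 ^ p` per unit mass, since `infDist x ∅ = 0`. -/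
def distortion (μ : Measure α) (p : ℝ) (Γ : Finset α) : ℝ :=
  ∫ x, infDist x Γ ^ p ∂μ

/-- `Γ` is an `L^r`-optimal quantizer of the distribution `μ` at level `N`: it minimizes the `L^r`
distortion among the nonempty grids with at most `N` points. -/
structure IsOptimalGrid (μ : Measure α) (r : ℝ) (N : ℕ) (Γ : Finset α) : Prop where
  nonempty : Γ.Nonempty
  card_le : Γ.card ≤ N
  distortion_le : ∀ Δ : Finset α, Δ.Nonempty → Δ.card ≤ N → distortion μ r Γ ≤ distortion μ r Δ

variable {μ : Measure α} {p r : ℝ}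

lemma distortion_nonneg (Γ : Finset α) : 0 ≤ distortion μ p Γ :=
  integral_nonneg fun _ => rpow_nonneg infDist_nonneg _

lemma distortion_singleton (o : α) : distortion μ p {o} = ∫ x, dist x o ^ p ∂μ := by
  simp only [distortion, Finset.coe_singleton, infDist_singleton]

lemma distortion_anti (hp : 0 ≤ p) (hμ : ∀ Γ : Finset α, Integrable (fun x => infDist x Γ ^ p) μ)
    {Γ Δ : Finset α} (hΓ : Γ.Nonempty) (hΓΔ : Γ ⊆ Δ) : distortion μ p Δ ≤ distortion μ p Γ :=
  integral_mono (hμ Δ) (hμ Γ) fun _ => rpow_le_rpow infDist_nonneg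
    (infDist_le_infDist_of_subset (Finset.coe_subset.2 hΓΔ) (Finset.coe_nonempty.2 hΓ)) hp

/-- Take the points of `Γ` nearest to those of `Δ`. -/
lemma exists_subset_distortion_le (hp : 0 ≤ p)
    (hμ : ∀ Γ : Finset α, Integrable (fun x => infDist x Γ ^ p) μ) {Γ Δ : Finset α}
    (hΓ : Γ.Nonempty) (hΔ : Δ.Nonempty) :
    ∃ Γ' ⊆ Γ, Γ'.Nonempty ∧ Γ'.card ≤ Δ.card ∧
      distortion μ p Γ' ≤ 4 ^ p * (distortion μ p Δ + distortion μ p Γ) := by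
  obtain ⟨Γ', hsub, hΓ', hcard, hdist⟩ := exists_subset_infDist_le hΓ hΔ
  refine ⟨Γ', hsub, hΓ', hcard, ?_⟩
  rw [distortion, distortion, distortion, ← integral_add (hμ Δ) (hμ Γ), ← integral_const_mul]
  refine integral_mono (hμ Γ') (((hμ Δ).add (hμ Γ)).const_mul _) fun x => ?_
  have hΔx : 0 ≤ infDist x Δ := infDist_nonneg
  have hΓx : 0 ≤ infDist x Γ := infDist_nonneg
  calc infDist x Γ' ^ p ≤ (2 * (infDist x Δ + infDist x Γ)) ^ p :=
        rpow_le_rpow infDist_nonneg (by linarith [hdist x]) hp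
    _ = 2 ^ p * (infDist x Δ + infDist x Γ) ^ p := mul_rpow zero_le_two (by positivity)
    _ ≤ 2 ^ p * (2 ^ p * (infDist x Δ ^ p + infDist x Γ ^ p)) := by
        gcongr
        exact add_rpow_le_two_rpow_mul hΔx hΓx hp
    _ = 4 ^ p * (infDist x Δ ^ p + infDist x Γ ^ p) := by
        rw [← mul_assoc, ← mul_rpow zero_le_two zero_le_two]
        norm_num

lemma sum_distortion_insert_erase_le [DecidableEq α] (hp : 0 ≤ p)
    (hμ : ∀ Γ : Finset α, Integrable (fun x => infDist x Γ ^ p) μ) {Γ Γ' : Finset α}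
    (hsub : Γ' ⊆ Γ) (hΓ' : Γ'.Nonempty) (y : α) :
    ∑ a ∈ Γ \ Γ', distortion μ p (insert y (Γ.erase a)) ≤
      (Γ \ Γ').card * distortion μ p (insert y Γ) + distortion μ p Γ' := by
  simp only [distortion]
  rw [← integral_finsetSum _ fun a _ => hμ _, ← integral_const_mul,
    ← integral_add ((hμ _).const_mul _) (hμ _)]
  exact integral_mono (integrable_finsetSum _ fun a _ => hμ _) (((hμ _).const_mul _).add (hμ _))
    fun x => sum_infDist_insert_erase_rpow_le hp hsub hΓ' x y

/-- At least half of the points of `Γ` lie outside the subset `Γ'` that replaces `Δ`. Trading one of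
them for `y` does not improve `Γ`, and averaged over all of them such a trade costs at most
`distortion μ r Γ'`. -/
lemma IsOptimalGrid.mul_distortion_sub_insert_le [DecidableEq α] {N : ℕ} {Γ Δ : Finset α}
    (h : IsOptimalGrid μ r N Γ) (hr : 0 ≤ r)
    (hμ : ∀ Γ : Finset α, Integrable (fun x => infDist x Γ ^ r) μ) (hΔ : Δ.Nonempty)
    (hΔN : 2 * Δ.card ≤ N) (y : α) :
    N * (distortion μ r Γ - distortion μ r (insert y Γ)) ≤ 4 * 4 ^ r * distortion μ r Δ := by
  rcases h.card_le.lt_or_eq with hlt | hcard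
  · have hy := h.distortion_le (insert y Γ) (Finset.insert_nonempty y Γ)
      ((Finset.card_insert_le _ _).trans hlt)
    exact (mul_nonpos_of_nonneg_of_nonpos N.cast_nonneg (sub_nonpos.2 hy)).trans
      (mul_nonneg (by positivity) (distortion_nonneg Δ))
  obtain ⟨Γ', hsub, hΓ', hcard', hdist⟩ := exists_subset_distortion_le hr hμ h.nonempty hΔ
  have hΓΔ : distortion μ r Γ ≤ distortion μ r Δ := h.distortion_le Δ hΔ (by lia)
  have hΓ'Δ : distortion μ r Γ' ≤ 2 * 4 ^ r * distortion μ r Δ :=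
    calc distortion μ r Γ' ≤ 4 ^ r * (distortion μ r Δ + distortion μ r Γ) := hdist
      _ ≤ 4 ^ r * (distortion μ r Δ + distortion μ r Δ) := by gcongr
      _ = 2 * 4 ^ r * distortion μ r Δ := by ring
  have hhalf : (N : ℝ) ≤ 2 * (Γ \ Γ').card := by
    have := Finset.card_sdiff_add_card_eq_card hsub
    exact_mod_cast (by lia : N ≤ 2 * (Γ \ Γ').card)
  have htrade : (Γ \ Γ').card * distortion μ r Γ ≤
      (Γ \ Γ').card * distortion μ r (insert y Γ) + distortion μ r Γ' := by
    refine le_trans ?_ (sum_distortion_insert_erase_le hr hμ hsub hΓ' y)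
    rw [← nsmul_eq_mul]
    refine Finset.card_nsmul_le_sum _ _ _ fun a ha =>
      h.distortion_le _ (Finset.insert_nonempty _ _) ?_
    have := Finset.card_erase_add_one (Finset.mem_sdiff.1 ha).1
    exact (Finset.card_insert_le _ _).trans (by lia)
  have hgain : 0 ≤ distortion μ r Γ - distortion μ r (insert y Γ) :=
    sub_nonneg.2 (distortion_anti hr hμ h.nonempty (Finset.subset_insert y Γ))
  nlinarith

variable [OpensMeasurableSpace α]

lemma distortion_map {Ω : Type*} [MeasurableSpace Ω] {P : Measure Ω} {X : Ω → α}
    (hX : AEMeasurable X P) (hp : 0 ≤ p) (Γ : Finset α) :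
    distortion (P.map X) p Γ = ∫ ω, infDist (X ω) Γ ^ p ∂P :=
  integral_map hX (continuous_infDist_rpow hp (Γ : Set α)).measurable.aestronglyMeasurable

lemma integrable_infDist_rpow [IsFiniteMeasure μ] (hp : 0 ≤ p) {o : α}
    (hμ : Integrable (fun x => dist x o ^ p) μ) (Γ : Finset α) :
    Integrable (fun x => infDist x Γ ^ p) μ := by
  refine (((integrable_const (infDist o Γ ^ p)).add hμ).const_mul (2 ^ p)).mono'
    (continuous_infDist_rpow hp (Γ : Set α)).measurable.aestronglyMeasurable
    (.of_forall fun x => ?_)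
  rw [norm_of_nonneg (rpow_nonneg infDist_nonneg _)]
  exact (rpow_le_rpow infDist_nonneg infDist_le_infDist_add_dist hp).trans
    (add_rpow_le_two_rpow_mul infDist_nonneg dist_nonneg hp)

lemma infDist_rpow_le_integral_add_distortion [IsProbabilityMeasure μ] (hp : 0 ≤ p) {o : α}
    (hμ : Integrable (fun x => dist x o ^ p) μ) (Γ : Finset α) :
    infDist o Γ ^ p ≤ 2 ^ p * (∫ x, dist x o ^ p ∂μ + distortion μ p Γ) := by
  have hΓ := integrable_infDist_rpow hp hμ Γ
  calc infDist o Γ ^ p = ∫ _, infDist o Γ ^ p ∂μ := by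
        simp only [integral_const, probReal_univ, one_smul]
    _ ≤ ∫ x, 2 ^ p * (dist x o ^ p + infDist x Γ ^ p) ∂μ := by
        refine integral_mono (integrable_const _) ((hμ.add hΓ).const_mul _) fun x => ?_
        refine (rpow_le_rpow infDist_nonneg ?_ hp).trans
          (add_rpow_le_two_rpow_mul dist_nonneg infDist_nonneg hp)
        rw [add_comm, dist_comm]
        exact infDist_le_infDist_add_dist
    _ = 2 ^ p * (∫ x, dist x o ^ p ∂μ + distortion μ p Γ) := by
        rw [integral_const_mul, integral_add hμ hΓ, distortion]

lemma mul_measureReal_closedBall_le_distortion_sub_insert [DecidableEq α] [IsFiniteMeasure μ]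
    (hr : 0 ≤ r) (hμ : ∀ Γ : Finset α, Integrable (fun x => infDist x Γ ^ r) μ) {Γ : Finset α}
    (hΓ : Γ.Nonempty) (y : α) :
    ((3 / 4) ^ r - (1 / 4) ^ r) * infDist y Γ ^ r * μ.real (closedBall y (infDist y Γ / 4)) ≤
      distortion μ r Γ - distortion μ r (insert y Γ) := by
  rw [distortion, distortion, ← integral_sub (hμ _) (hμ _), mul_comm, ← smul_eq_mul,
    ← integral_indicator_const _ measurableSet_closedBall]
  refine integral_mono ((integrable_const _).indicator measurableSet_closedBall)
    ((hμ _).sub (hμ _)) fun x => ?_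
  have hδ : 0 ≤ infDist y Γ := infDist_nonneg
  by_cases hx : x ∈ closedBall y (infDist y Γ / 4)
  · rw [Set.indicator_of_mem hx]
    rw [mem_closedBall] at hx
    have hfar : 3 / 4 * infDist y Γ ≤ infDist x Γ := by
      have := infDist_le_infDist_add_dist (s := (Γ : Set α)) (x := y) (y := x)
      rw [dist_comm] at this
      linarith
    have hnear : infDist x (insert y Γ : Finset α) ≤ 1 / 4 * infDist y Γ :=
      (infDist_le_dist_of_mem (Finset.mem_coe.2 (Finset.mem_insert_self y Γ))).trans (by linarith)
    calc ((3 / 4) ^ r - (1 / 4) ^ r) * infDist y Γ ^ r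
        = (3 / 4 * infDist y Γ) ^ r - (1 / 4 * infDist y Γ) ^ r := by
          rw [mul_rpow (by norm_num) hδ, mul_rpow (by norm_num) hδ, sub_mul]
      _ ≤ infDist x Γ ^ r - infDist x (insert y Γ : Finset α) ^ r :=
          sub_le_sub (rpow_le_rpow (by positivity) hfar hr) (rpow_le_rpow infDist_nonneg hnear hr)
  · rw [Set.indicator_of_notMem hx]
    exact sub_nonneg.2 (rpow_le_rpow infDist_nonneg (infDist_le_infDist_of_subset
      (Finset.coe_subset.2 (Finset.subset_insert y Γ)) (Finset.coe_nonempty.2 hΓ)) hr)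

/-- Fubini for the relation `dist x y ≤ infDist y Γ / 4`: it contains the pairs with
`dist x y ≤ infDist x Γ / 5`, and for these `infDist y Γ ≥ 4 / 5 * infDist x Γ`. -/
lemma lintegral_infDist_rpow_mul_measure_closedBall_le [SecondCountableTopology α]
    [IsFiniteMeasure μ] {ν : Measure α} [SFinite ν] {c η : ℝ} (hr : 0 ≤ r) (hc : 0 ≤ c)
    {Γ : Finset α}
    (h : ∀ y, c * infDist y Γ ^ r * μ.real (closedBall y (infDist y Γ / 4)) ≤ η) :
    ∫⁻ x, ENNReal.ofReal (c * (4 / 5 * infDist x Γ) ^ r) * ν (closedBall x (infDist x Γ / 5)) ∂μ ≤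
      ENNReal.ofReal η * ν Set.univ := by
  set D : α → ℝ := fun x => infDist x Γ
  have : Continuous D := continuous_infDist_pt _
  let T : Set (α × α) := {z | dist z.1 z.2 ≤ D z.2 / 4}
  let f : α × α → ℝ≥0∞ := T.indicator fun z => ENNReal.ofReal (c * D z.2 ^ r)
  have hf : Measurable f := by
    refine Measurable.indicator ?_ (measurableSet_le (by fun_prop) (by fun_prop))
    exact ENNReal.measurable_ofReal.comp (continuous_const.mul
      ((continuous_infDist_rpow hr (Γ : Set α)).comp continuous_snd)).measurable
  have hinner (x : α) : ENNReal.ofReal (c * (4 / 5 * D x) ^ r) * ν (closedBall x (D x / 5)) ≤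
      ∫⁻ y, f (x, y) ∂ν := by
    rw [← setLIntegral_const]
    refine (setLIntegral_mono' measurableSet_closedBall fun y hy => ?_).trans
      (setLIntegral_le_lintegral _ _)
    rw [mem_closedBall, dist_comm] at hy
    have hDy : 4 / 5 * D x ≤ D y := by
      have : D x ≤ D y + dist x y := infDist_le_infDist_add_dist
      linarith
    have hmem : (x, y) ∈ T := hy.trans (by linarith)
    have hfxy : f (x, y) = ENNReal.ofReal (c * D y ^ r) := Set.indicator_of_mem hmem _
    rw [hfxy]
    have : 0 ≤ D x := infDist_nonneg
    gcongr
  have houter (y : α) : ∫⁻ x, f (x, y) ∂μ ≤ ENNReal.ofReal η := by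
    have hfy (x : α) : f (x, y) =
        (closedBall y (D y / 4)).indicator (fun _ => ENNReal.ofReal (c * D y ^ r)) x := by
      simp only [f, T, Set.indicator, mem_closedBall, Set.mem_ofPred_eq]
    simp only [hfy]
    rw [lintegral_indicator_const measurableSet_closedBall, ← ofReal_measureReal,
      ← ENNReal.ofReal_mul (mul_nonneg hc (rpow_nonneg infDist_nonneg r))]
    exact ENNReal.ofReal_le_ofReal (h y)
  calc _ ≤ ∫⁻ x, ∫⁻ y, f (x, y) ∂ν ∂μ := lintegral_mono hinner
    _ = ∫⁻ y, ∫⁻ x, f (x, y) ∂μ ∂ν := lintegral_lintegral_swap hf.aemeasurable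
    _ ≤ ∫⁻ _, ENNReal.ofReal η ∂ν := lintegral_mono houter
    _ = ENNReal.ofReal η * ν Set.univ := lintegral_const _

end Distortion

section Map

variable {α β : Type*} [PseudoMetricSpace α] [PseudoMetricSpace β]

lemma infDist_image_of_dist_eq {φ : α → β} {c : ℝ} (hc : 0 ≤ c)
    (hφ : ∀ x y, dist (φ x) (φ y) = c * dist x y) (x : α) (s : Set α) :
    infDist (φ x) (φ '' s) = c * infDist x s := by
  rw [infDist_eq_iInf, infDist_eq_iInf, Real.mul_iInf_of_nonneg hc]
  exact (Set.imageFactorization_surjective.iInf_congr _ fun y => hφ x y).symm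

variable [MeasurableSpace α] [MeasurableSpace β] {μ : Measure α}

variable [DecidableEq β] {c : ℝ} (φ : α ≃ᵐ β)

lemma distortion_map_image (hc : 0 ≤ c) (hφ : ∀ x y, dist (φ x) (φ y) = c * dist x y) (p : ℝ)
    (Γ : Finset α) : distortion (μ.map φ) p (Γ.image φ) = c ^ p * distortion μ p Γ := by
  simp only [distortion]
  rw [integral_map_equiv, ← integral_const_mul]
  simp only [Finset.coe_image, infDist_image_of_dist_eq hc hφ, mul_rpow hc infDist_nonneg]

lemma IsOptimalGrid.map_image {r : ℝ} {N : ℕ} {Γ : Finset α} (h : IsOptimalGrid μ r N Γ)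
    (hc : 0 ≤ c) (hφ : ∀ x y, dist (φ x) (φ y) = c * dist x y) :
    IsOptimalGrid (μ.map φ) r N (Γ.image φ) where
  nonempty := h.nonempty.image φ
  card_le := Finset.card_image_le.trans h.card_le
  distortion_le Δ hΔ hΔN := by
    classical
    obtain ⟨Δ, rfl⟩ : ∃ Δ' : Finset α, Δ'.image φ = Δ :=
      ⟨Δ.image φ.symm, by simp only [Finset.image_image, φ.self_comp_symm, Finset.image_id]⟩
    rw [Finset.card_image_of_injective _ φ.injective] at hΔN
    rw [distortion_map_image φ hc hφ, distortion_map_image φ hc hφ]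
    gcongr
    exact h.distortion_le Δ (Finset.image_nonempty.1 hΔ) hΔN

end Map

section Interpolation

variable {α : Type*} [MeasurableSpace α] {μ : Measure α}

lemma lintegral_rpow_le_mul_of_weight {w f : α → ℝ} (hw : Measurable w) (hf : Measurable f)
    (hw0 : ∀ x, 0 < w x) (hf0 : ∀ x, 0 ≤ f x) {s t u q : ℝ} (hs : 0 < s) (hst : s ≤ t)
    (hq : q * s = u * (t - s)) :
    ∫⁻ x, ENNReal.ofReal (f x ^ s) ∂μ ≤
      (∫⁻ x, ENNReal.ofReal (w x ^ (-q) * f x ^ t) ∂μ) ^ (s / t) *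
        (∫⁻ x, ENNReal.ofReal (w x ^ u) ∂μ) ^ (1 - s / t) := by
  have ht : 0 < t := hs.trans_le hst
  have hθ : 0 ≤ s / t := by positivity
  have hθ' : 0 ≤ 1 - s / t := sub_nonneg.2 ((div_le_one ht).2 hst)
  have hexp : -q * (s / t) + u * (1 - s / t) = 0 := by
    field_simp
    linarith
  have hpoint (x : α) : ENNReal.ofReal (f x ^ s) =
      ENNReal.ofReal (w x ^ (-q) * f x ^ t) ^ (s / t) * ENNReal.ofReal (w x ^ u) ^ (1 - s / t) := by
    have hwx := hw0 x
    have hfx := hf0 x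
    rw [ENNReal.ofReal_rpow_of_nonneg (by positivity) hθ,
      ENNReal.ofReal_rpow_of_nonneg (by positivity) hθ', ← ENNReal.ofReal_mul (by positivity),
      mul_rpow (by positivity) (by positivity), ← rpow_mul hwx.le, ← rpow_mul hwx.le,
      ← rpow_mul hfx, mul_right_comm, ← rpow_add hwx, hexp, mul_div_cancel₀ _ ht.ne', rpow_zero,
      one_mul]
  simp only [hpoint]
  exact ENNReal.lintegral_mul_norm_pow_le (by fun_prop) (by fun_prop) hθ hθ' (by ring)

end Interpolation

section Moment

variable {E : Type*} [NormedAddCommGroup E] [MeasurableSpace E] {μ : Measure E}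

lemma lintegral_one_add_norm_rpow_le [IsProbabilityMeasure μ] {q : ℝ} (hq : 0 ≤ q)
    (hμ : Integrable (fun x => ‖x‖ ^ q) μ) (hμ1 : ∫ x, ‖x‖ ^ q ∂μ ≤ 1) :
    ∫⁻ x, ENNReal.ofReal ((1 + ‖x‖) ^ q) ∂μ ≤ ENNReal.ofReal (2 ^ q * 2) := by
  have hinteg : Integrable (fun x => 2 ^ q * (1 + ‖x‖ ^ q)) μ :=
    ((integrable_const 1).add hμ).const_mul _
  calc ∫⁻ x, ENNReal.ofReal ((1 + ‖x‖) ^ q) ∂μ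
      ≤ ∫⁻ x, ENNReal.ofReal (2 ^ q * (1 + ‖x‖ ^ q)) ∂μ := by
        gcongr with x
        simpa only [one_rpow] using add_rpow_le_two_rpow_mul zero_le_one (norm_nonneg x) hq
    _ = ENNReal.ofReal (∫ x, 2 ^ q * (1 + ‖x‖ ^ q) ∂μ) :=
        (ofReal_integral_eq_lintegral_ofReal hinteg (.of_forall fun x => by positivity)).symm
    _ ≤ ENNReal.ofReal (2 ^ q * 2) := by
        rw [integral_const_mul, integral_add (integrable_const 1) hμ, integral_const,
          probReal_univ, one_smul]
        gcongr
        linarith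

variable [BorelSpace E]

lemma integrable_infDist_rpow_of_norm [IsFiniteMeasure μ] {p : ℝ} (hp : 0 ≤ p)
    (hμ : Integrable (fun x => ‖x‖ ^ p) μ) (Γ : Finset E) :
    Integrable (fun x => infDist x Γ ^ p) μ :=
  integrable_infDist_rpow hp (o := 0) (by simpa only [dist_zero_right] using hμ) Γ

variable {p q : ℝ}

lemma integrable_norm_rpow_of_le [IsFiniteMeasure μ] (hp : 0 ≤ p) (hpq : p ≤ q)
    (hμ : Integrable (fun x => ‖x‖ ^ q) μ) : Integrable (fun x => ‖x‖ ^ p) μ := by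
  refine ((integrable_const 1).add hμ).mono' (by fun_prop) (.of_forall fun x => ?_)
  rw [norm_of_nonneg (by positivity)]
  exact rpow_le_one_add_rpow (norm_nonneg x) hp hpq

variable [IsProbabilityMeasure μ] (hμ : Integrable (fun x => ‖x‖ ^ q) μ)
  (hμ1 : ∫ x, ‖x‖ ^ q ∂μ ≤ 1)
include hμ hμ1

lemma integral_norm_rpow_le_two (hp : 0 ≤ p) (hpq : p ≤ q) : ∫ x, ‖x‖ ^ p ∂μ ≤ 2 :=
  calc ∫ x, ‖x‖ ^ p ∂μ ≤ ∫ x, (1 + ‖x‖ ^ q) ∂μ :=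
        integral_mono (integrable_norm_rpow_of_le hp hpq hμ) ((integrable_const 1).add hμ)
          fun x => rpow_le_one_add_rpow (norm_nonneg x) hp hpq
    _ = 1 + ∫ x, ‖x‖ ^ q ∂μ := by
        rw [integral_add (integrable_const 1) hμ, integral_const, probReal_univ, one_smul]
    _ ≤ 2 := by linarith

lemma distortion_singleton_zero_le_two (hp : 0 ≤ p) (hpq : p ≤ q) : distortion μ p {0} ≤ 2 := by
  simpa only [distortion_singleton, dist_zero_right] using
    integral_norm_rpow_le_two hμ hμ1 hp hpq

lemma IsOptimalGrid.infDist_zero_le (hp : 0 < p) (hpq : p ≤ q) {N : ℕ} (hN : 1 ≤ N) {Γ : Finset E}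
    (h : IsOptimalGrid μ p N Γ) : infDist (0 : E) Γ ≤ (2 ^ p * 4) ^ p⁻¹ := by
  have hinteg := integrable_norm_rpow_of_le hp.le hpq hμ
  rw [le_rpow_inv_iff_of_pos infDist_nonneg (by positivity) hp]
  calc infDist (0 : E) Γ ^ p ≤ 2 ^ p * (∫ x, dist x 0 ^ p ∂μ + distortion μ p Γ) :=
        infDist_rpow_le_integral_add_distortion hp.le
          (by simpa only [dist_zero_right] using hinteg) Γ
    _ ≤ 2 ^ p * (2 + 2) := by
        simp only [dist_zero_right]
        gcongr
        · exact integral_norm_rpow_le_two hμ hμ1 hp.le hpq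
        · exact (h.distortion_le {0} (Finset.singleton_nonempty 0) (by simpa using hN)).trans
            (distortion_singleton_zero_le_two hμ hμ1 hp.le hpq)
    _ = 2 ^ p * 4 := by norm_num

end Moment

section FiniteDimensional

variable {E : Type*} [NormedAddCommGroup E] [MeasurableSpace E]

/-- The measure with density `(1 + ‖x‖) ^ (-q)` with respect to `ν`. For a Haar measure `ν` and `q`
greater than the dimension it is finite, with polynomial lower bounds on the mass of balls. -/
def bracketMeasure (ν : Measure E) (q : ℝ) : Measure E :=
  ν.withDensity fun x => ENNReal.ofReal ((1 + ‖x‖) ^ (-q))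

variable [NormedSpace ℝ E] [BorelSpace E] [FiniteDimensional ℝ E]

lemma isFiniteMeasure_bracketMeasure (ν : Measure E) [ν.IsAddHaarMeasure] {q : ℝ}
    (hq : finrank ℝ E < q) : IsFiniteMeasure (bracketMeasure ν q) :=
  isFiniteMeasure_withDensity (finite_integral_one_add_norm hq).ne

lemma ofReal_le_bracketMeasure_closedBall (ν : Measure E) [ν.IsAddHaarMeasure] {q M ρ : ℝ}
    (hq : 0 ≤ q) (hρ : 0 ≤ ρ) {x : E} (hM : ρ ≤ M * (1 + ‖x‖)) :
    ENNReal.ofReal (((1 + M) * (1 + ‖x‖)) ^ (-q) * (ρ ^ finrank ℝ E * ν.real (ball 0 1))) ≤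
      bracketMeasure ν q (closedBall x ρ) := by
  have hx : 0 < (1 + M) * (1 + ‖x‖) := by linarith [norm_nonneg x]
  have hball : ENNReal.ofReal (ρ ^ finrank ℝ E * ν.real (ball 0 1)) = ν (closedBall x ρ) := by
    rw [Measure.addHaar_closedBall ν x hρ, ENNReal.ofReal_mul (by positivity), ofReal_measureReal]
  rw [ENNReal.ofReal_mul (by positivity), hball, bracketMeasure,
    withDensity_apply _ measurableSet_closedBall, ← setLIntegral_const]
  refine setLIntegral_mono' measurableSet_closedBall fun y hy => ?_
  refine ENNReal.ofReal_le_ofReal (rpow_le_rpow_of_nonpos (by positivity) ?_ (by linarith))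
  rw [mem_closedBall, dist_eq_norm] at hy
  linarith [norm_le_insert' y x]

lemma exists_mul_rpow_le_mul_bracketMeasure_closedBall (ν : Measure E) [ν.IsAddHaarMeasure]
    {c q r M : ℝ} (hc : 0 < c) (hq : 0 ≤ q) (hr : 0 ≤ r) (hM : 0 ≤ M) :
    ∃ κ, 0 < κ ∧ ∀ (x : E) (δ : ℝ), 0 ≤ δ → δ ≤ M * (1 + ‖x‖) →
      ENNReal.ofReal (κ * ((1 + ‖x‖) ^ (-q) * δ ^ (finrank ℝ E + r))) ≤
        ENNReal.ofReal (c * (4 / 5 * δ) ^ r) * bracketMeasure ν q (closedBall x (δ / 5)) := by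
  let v := ν.real (ball 0 1)
  have hv : 0 < v := ENNReal.toReal_pos (measure_ball_pos _ _ one_pos).ne' measure_ball_lt_top.ne
  refine ⟨c * (4 / 5) ^ r * (1 + M) ^ (-q) / 5 ^ finrank ℝ E * v, by positivity,
    fun x δ hδ hδx => ?_⟩
  have hball := ofReal_le_bracketMeasure_closedBall ν hq (by positivity : 0 ≤ δ / 5)
    (by linarith : δ / 5 ≤ M * (1 + ‖x‖))
  refine le_trans (le_of_eq ?_) (mul_le_mul_right hball _)
  rw [← ENNReal.ofReal_mul (by positivity), mul_rpow (by norm_num) hδ,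
    mul_rpow (by positivity) (by positivity), div_pow,
    rpow_add_of_nonneg hδ (Nat.cast_nonneg _) hr, rpow_natCast]
  congr 1
  ring

lemma exists_lintegral_mul_infDist_rpow_le (E : Type*) [NormedAddCommGroup E] [NormedSpace ℝ E]
    [MeasurableSpace E] [BorelSpace E] [FiniteDimensional ℝ E] [DecidableEq E] {r q M : ℝ}
    (hr : 0 < r) (hq : finrank ℝ E < q) (hM : 0 ≤ M) :
    ∃ C, 0 < C ∧ ∀ (μ : Measure E) [IsFiniteMeasure μ], Integrable (fun x => ‖x‖ ^ r) μ →
      ∀ Γ : Finset E, Γ.Nonempty → infDist (0 : E) Γ ≤ M →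
      ∀ η, 0 ≤ η → (∀ y, distortion μ r Γ - distortion μ r (insert y Γ) ≤ η) →
        ∫⁻ x, ENNReal.ofReal ((1 + ‖x‖) ^ (-q) * infDist x Γ ^ (finrank ℝ E + r)) ∂μ ≤
          ENNReal.ofReal (C * η) := by
  let ν := bracketMeasure (Measure.addHaar : Measure E) q
  have : IsFiniteMeasure ν := isFiniteMeasure_bracketMeasure _ hq
  have hc : 0 < (3 / 4 : ℝ) ^ r - (1 / 4) ^ r :=
    sub_pos.2 (rpow_lt_rpow (by norm_num) (by norm_num) hr)
  obtain ⟨κ, hκ, hball⟩ := exists_mul_rpow_le_mul_bracketMeasure_closedBall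
    (Measure.addHaar : Measure E) hc ((Nat.cast_nonneg _).trans hq.le) hr.le
    (by positivity : 0 ≤ M + 1)
  refine ⟨κ⁻¹ * (ν.real Set.univ + 1), by positivity, fun μ _ hμ Γ hΓ hΓM η hη0 hη => ?_⟩
  have hdist (x : E) : infDist x Γ ≤ (M + 1) * (1 + ‖x‖) := by
    have := infDist_le_infDist_add_dist (s := (Γ : Set E)) (x := x) (y := 0)
    rw [dist_zero_right] at this
    nlinarith [norm_nonneg x]
  have hfubini := lintegral_infDist_rpow_mul_measure_closedBall_le (ν := ν) hr.le hc.le fun y =>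
    (mul_measureReal_closedBall_le_distortion_sub_insert hr.le
      (integrable_infDist_rpow_of_norm hr.le hμ) hΓ y).trans (hη y)
  calc ∫⁻ x, ENNReal.ofReal ((1 + ‖x‖) ^ (-q) * infDist x Γ ^ (finrank ℝ E + r)) ∂μ
      = ENNReal.ofReal κ⁻¹ *
          ∫⁻ x, ENNReal.ofReal (κ * ((1 + ‖x‖) ^ (-q) * infDist x Γ ^ (finrank ℝ E + r))) ∂μ := by
        rw [← lintegral_const_mul' _ _ ENNReal.ofReal_ne_top]
        simp only [← ENNReal.ofReal_mul (inv_pos.2 hκ).le, inv_mul_cancel_left₀ hκ.ne']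
    _ ≤ ENNReal.ofReal κ⁻¹ * (ENNReal.ofReal η * ν Set.univ) := by
        gcongr
        exact (lintegral_mono fun x => hball x _ infDist_nonneg (hdist x)).trans hfubini
    _ = ENNReal.ofReal (κ⁻¹ * ν.real Set.univ * η) := by
        rw [mul_assoc, mul_comm (ν.real _), ENNReal.ofReal_mul (by positivity),
          ENNReal.ofReal_mul hη0, ofReal_measureReal]
    _ ≤ ENNReal.ofReal (κ⁻¹ * (ν.real Set.univ + 1) * η) := by
        gcongr
        linarith

end FiniteDimensional

section Mismatch

variable (E : Type*) [NormedAddCommGroup E] [NormedSpace ℝ E] [MeasurableSpace E] [BorelSpace E]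
  [FiniteDimensional ℝ E]

/-- Hölder's inequality trades the weighted moment of order `d + r` of the distance to the grid for
the moment of order `r'` of the distribution. -/
lemma exists_distortion_le_mul_rpow_of_forall_sub_insert_le [DecidableEq E] {r r' s M : ℝ}
    (hr : 0 < r) (hr' : r ≤ r') (hs : 0 < s)
    (hs' : s < (finrank ℝ E + r) * r' / (finrank ℝ E + r')) (hM : 0 ≤ M) :
    ∃ C, 0 < C ∧ ∀ (μ : Measure E) [IsProbabilityMeasure μ],
      Integrable (fun x => ‖x‖ ^ r') μ → ∫ x, ‖x‖ ^ r' ∂μ ≤ 1 →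
      ∀ Γ : Finset E, Γ.Nonempty → infDist (0 : E) Γ ≤ M →
      ∀ η, 0 ≤ η → (∀ y, distortion μ r Γ - distortion μ r (insert y Γ) ≤ η) →
        distortion μ s Γ ≤ C * η ^ (s / (finrank ℝ E + r)) := by
  set t : ℝ := finrank ℝ E + r
  have hr'0 : 0 < r' := hr.trans_le hr'
  have ht : 0 < t := by positivity
  rw [lt_div_iff₀ (by positivity)] at hs'
  have hst : s ≤ t := by
    have hsn : 0 ≤ s * finrank ℝ E := by positivity
    exact le_of_mul_le_mul_right (by linarith : s * r' ≤ t * r') hr'0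
  have hq : finrank ℝ E < r' * (t - s) / s := by
    rw [lt_div_iff₀ hs]
    linarith
  have hθ : 0 ≤ 1 - s / t := sub_nonneg.2 ((div_le_one ht).2 hst)
  obtain ⟨C, hC, hweighted⟩ := exists_lintegral_mul_infDist_rpow_le E hr hq hM
  refine ⟨C ^ (s / t) * (2 ^ r' * 2) ^ (1 - s / t), by positivity,
    fun μ _ hμ hμ1 Γ hΓ hΓM η hη0 hη => ?_⟩
  rw [distortion, integral_eq_lintegral_of_nonneg_ae
    (.of_forall fun x => rpow_nonneg infDist_nonneg s)
    (continuous_infDist_rpow hs.le (Γ : Set E)).aestronglyMeasurable]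
  refine ENNReal.toReal_le_of_le_ofReal (by positivity) ?_
  calc ∫⁻ x, ENNReal.ofReal (infDist x Γ ^ s) ∂μ
      ≤ (∫⁻ x, ENNReal.ofReal ((1 + ‖x‖) ^ (-(r' * (t - s) / s)) * infDist x Γ ^ t) ∂μ) ^ (s / t) *
          (∫⁻ x, ENNReal.ofReal ((1 + ‖x‖) ^ r') ∂μ) ^ (1 - s / t) :=
        lintegral_rpow_le_mul_of_weight (by fun_prop) (continuous_infDist_pt _).measurable
          (fun x => by positivity) (fun x => infDist_nonneg) hs hst (div_mul_cancel₀ _ hs.ne')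
    _ ≤ ENNReal.ofReal (C * η) ^ (s / t) * ENNReal.ofReal (2 ^ r' * 2) ^ (1 - s / t) := by
        gcongr
        · exact hweighted μ (integrable_norm_rpow_of_le hr.le hr' hμ) Γ hΓ hΓM η hη0 hη
        · exact lintegral_one_add_norm_rpow_le hr'0.le hμ hμ1
    _ = ENNReal.ofReal (C ^ (s / t) * (2 ^ r' * 2) ^ (1 - s / t) * η ^ (s / t)) := by
        rw [ENNReal.ofReal_rpow_of_nonneg (by positivity) (by positivity),
          ENNReal.ofReal_rpow_of_nonneg (by positivity) hθ, ← ENNReal.ofReal_mul (by positivity),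
          mul_rpow hC.le hη0, mul_right_comm]

/-- A step of greedy quantization. -/
lemma exists_insert_distortion_rpow_le [DecidableEq E] (hE : 0 < finrank ℝ E) {r r' : ℝ}
    (hr : 0 < r) (hr' : r < r') :
    ∃ C, 0 < C ∧ ∀ (μ : Measure E) [IsProbabilityMeasure μ],
      Integrable (fun x => ‖x‖ ^ r') μ → ∫ x, ‖x‖ ^ r' ∂μ ≤ 1 →
      ∀ Γ : Finset E, 0 ∈ Γ → ∃ y, distortion μ r Γ ^ (1 + finrank ℝ E / r) ≤
        C * (distortion μ r Γ - distortion μ r (insert y Γ)) := by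
  have hn : (0 : ℝ) < finrank ℝ E := by exact_mod_cast hE
  have hs' : r < (finrank ℝ E + r) * r' / (finrank ℝ E + r') := by
    rw [lt_div_iff₀ (by linarith)]
    nlinarith
  obtain ⟨C, hC, hbound⟩ :=
    exists_distortion_le_mul_rpow_of_forall_sub_insert_le E hr hr'.le hr hs' le_rfl
  set β : ℝ := 1 + finrank ℝ E / r
  have hβ : β = (r / (finrank ℝ E + r))⁻¹ := by
    simp only [β]
    field_simp
    ring
  refine ⟨(2 * C) ^ β, by positivity, fun μ _ hμ hμ1 Γ hΓ => ?_⟩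
  rcases (distortion_nonneg (μ := μ) (p := r) Γ).eq_or_lt with hD | hD
  · refine ⟨0, ?_⟩
    rw [Finset.insert_eq_of_mem hΓ, sub_self, mul_zero, ← hD, zero_rpow (by positivity)]
  by_contra! hsmall
  have hη (y : E) :
      distortion μ r Γ - distortion μ r (insert y Γ) ≤ (distortion μ r Γ / (2 * C)) ^ β := by
    rw [div_rpow hD.le (by positivity), le_div_iff₀' (by positivity)]
    exact (hsmall y).le
  have hle := hbound μ hμ hμ1 Γ ⟨0, hΓ⟩ (infDist_zero_of_mem (Finset.mem_coe.2 hΓ)).le _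
    (by positivity) hη
  rw [hβ, rpow_inv_rpow (by positivity) (by positivity)] at hle
  have : C * (distortion μ r Γ / (2 * C)) = distortion μ r Γ / 2 := by field_simp
  linarith

lemma exists_zero_mem_mul_distortion_rpow_le (hE : 0 < finrank ℝ E) {r r' : ℝ} (hr : 0 < r)
    (hr' : r < r') :
    ∃ C, 0 < C ∧ ∀ (μ : Measure E) [IsProbabilityMeasure μ],
      Integrable (fun x => ‖x‖ ^ r') μ → ∫ x, ‖x‖ ^ r' ∂μ ≤ 1 →
      ∀ k : ℕ, ∃ Γ : Finset E, 0 ∈ Γ ∧ Γ.card ≤ k + 1 ∧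
        k * distortion μ r Γ ^ (finrank ℝ E / r) ≤ C := by
  classical
  obtain ⟨C, hC, hstep⟩ := exists_insert_distortion_rpow_le E hE hr hr'
  set p : ℝ := finrank ℝ E / r
  have hp : 0 < p := by positivity
  refine ⟨C / p, by positivity, fun μ _ hμ hμ1 k => ?_⟩
  induction k with
  | zero =>
    refine ⟨{0}, Finset.mem_singleton_self 0, le_rfl, ?_⟩
    rw [Nat.cast_zero, zero_mul]
    positivity
  | succ k ih =>
    obtain ⟨Γ, hΓ, hcard, hle⟩ := ih
    obtain ⟨y, hy⟩ := hstep μ hμ hμ1 Γ hΓ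
    refine ⟨insert y Γ, Finset.mem_insert_of_mem hΓ,
      (Finset.card_insert_le _ _).trans (by lia), ?_⟩
    rw [Nat.cast_succ]
    exact add_one_mul_rpow_le_of_rpow_one_add_le_mul_sub hp (distortion_nonneg _)
      (distortion_nonneg _) hC hy hle

/-- Pierce's lemma. -/
lemma exists_card_le_distortion_le_mul_rpow_neg (hE : 0 < finrank ℝ E) {r r' : ℝ} (hr : 0 < r)
    (hr' : r < r') :
    ∃ C, 0 < C ∧ ∀ (μ : Measure E) [IsProbabilityMeasure μ],
      Integrable (fun x => ‖x‖ ^ r') μ → ∫ x, ‖x‖ ^ r' ∂μ ≤ 1 →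
      ∀ N : ℕ, 1 ≤ N → ∃ Γ : Finset E, Γ.Nonempty ∧ Γ.card ≤ N ∧
        distortion μ r Γ ≤ C * (N : ℝ) ^ (-(r / finrank ℝ E)) := by
  obtain ⟨C, hC, hgreedy⟩ := exists_zero_mem_mul_distortion_rpow_le E hE hr hr'
  set p : ℝ := finrank ℝ E / r
  have hp : 0 < p := by positivity
  refine ⟨(C + 2 ^ p) ^ p⁻¹, by positivity, fun μ _ hμ hμ1 N hN => ?_⟩
  obtain ⟨k, rfl⟩ := Nat.exists_eq_add_of_le' hN
  obtain ⟨Γ, hΓ, hcard, hle⟩ := hgreedy μ hμ hμ1 k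
  have htwo : distortion μ r Γ ≤ 2 :=
    (distortion_anti hr.le
      (integrable_infDist_rpow_of_norm hr.le (integrable_norm_rpow_of_le hr.le hr'.le hμ))
      (Finset.singleton_nonempty 0) (Finset.singleton_subset_iff.2 hΓ)).trans
      (distortion_singleton_zero_le_two hμ hμ1 hr.le hr'.le)
  have hmul : ((k + 1 : ℕ) : ℝ) * distortion μ r Γ ^ p ≤ C + 2 ^ p := by
    have := rpow_le_rpow (distortion_nonneg Γ) htwo hp.le
    push_cast
    linarith
  refine ⟨Γ, ⟨0, hΓ⟩, hcard, ?_⟩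
  rwa [← inv_div, rpow_neg (by positivity), ← div_eq_mul_inv,
    ← div_rpow (by positivity) (by positivity),
    le_rpow_inv_iff_of_pos (distortion_nonneg Γ) (by positivity) hp, le_div_iff₀' (by positivity)]

lemma exists_distortion_sub_insert_le_mul_rpow_neg [DecidableEq E] (hE : 0 < finrank ℝ E)
    {r r' : ℝ} (hr : 0 < r) (hr' : r < r') :
    ∃ C, 0 < C ∧ ∀ (μ : Measure E) [IsProbabilityMeasure μ],
      Integrable (fun x => ‖x‖ ^ r') μ → ∫ x, ‖x‖ ^ r' ∂μ ≤ 1 →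
      ∀ N : ℕ, 1 ≤ N → ∀ Γ : Finset E, IsOptimalGrid μ r N Γ → ∀ y,
        distortion μ r Γ - distortion μ r (insert y Γ) ≤
          C * (N : ℝ) ^ (-((finrank ℝ E + r) / finrank ℝ E)) := by
  obtain ⟨C, hC, hpierce⟩ := exists_card_le_distortion_le_mul_rpow_neg E hE hr hr'
  set p : ℝ := r / finrank ℝ E
  have hexp : -((finrank ℝ E + r) / finrank ℝ E) = -p + -1 := by
    simp only [p]
    field_simp
    ring
  refine ⟨2 + 4 * 4 ^ r * C * 3 ^ p, by positivity, fun μ _ hμ hμ1 N hN Γ h y => ?_⟩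
  have hinteg := integrable_infDist_rpow_of_norm hr.le (integrable_norm_rpow_of_le hr.le hr'.le hμ)
  rcases hN.eq_or_lt with rfl | hN2
  · calc distortion μ r Γ - distortion μ r (insert y Γ) ≤ distortion μ r {0} :=
          (sub_le_self _ (distortion_nonneg _)).trans
            (h.distortion_le {0} (Finset.singleton_nonempty 0) le_rfl)
      _ ≤ 2 := distortion_singleton_zero_le_two hμ hμ1 hr.le hr'.le
      _ ≤ _ := by
          rw [Nat.cast_one, one_rpow, mul_one]
          exact le_add_of_nonneg_right (by positivity)
  have hN0 : (0 : ℝ) < N := by positivity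
  obtain ⟨Δ, hΔ, hcard, hle⟩ := hpierce μ hμ hμ1 (N / 2) (by lia)
  have hthird : (N : ℝ) / 3 ≤ (N / 2 : ℕ) := by
    rw [div_le_iff₀ three_pos]
    exact_mod_cast (by lia : N ≤ N / 2 * 3)
  rw [hexp, rpow_add hN0, rpow_neg_one, ← mul_assoc, ← div_eq_mul_inv, le_div_iff₀' hN0]
  calc N * (distortion μ r Γ - distortion μ r (insert y Γ)) ≤ 4 * 4 ^ r * distortion μ r Δ :=
        h.mul_distortion_sub_insert_le hr.le hinteg hΔ (by lia) y
    _ ≤ 4 * 4 ^ r * (C * (N / 3) ^ (-p)) := by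
        gcongr
        refine hle.trans ?_
        gcongr ?_ * ?_
        exact rpow_le_rpow_of_nonpos (by positivity) hthird (neg_nonpos.2 (by positivity))
    _ = 4 * 4 ^ r * C * 3 ^ p * N ^ (-p) := by
        rw [div_rpow hN0.le three_pos.le, rpow_neg three_pos.le, div_inv_eq_mul]
        ring
    _ ≤ (2 + 4 * 4 ^ r * C * 3 ^ p) * N ^ (-p) := by
        gcongr
        linarith

lemma exists_distortion_le_of_isOptimalGrid_of_integral_le_one (hE : 0 < finrank ℝ E) {r r' s : ℝ}
    (hr : 0 < r) (hr' : r < r') (hs : 0 < s)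
    (hs' : s < (finrank ℝ E + r) * r' / (finrank ℝ E + r')) :
    ∃ C, 0 < C ∧ ∀ (μ : Measure E) [IsProbabilityMeasure μ],
      Integrable (fun x => ‖x‖ ^ r') μ → ∫ x, ‖x‖ ^ r' ∂μ ≤ 1 →
      ∀ N : ℕ, 1 ≤ N → ∀ Γ : Finset E, IsOptimalGrid μ r N Γ →
        distortion μ s Γ ≤ C * (N : ℝ) ^ (-(s / finrank ℝ E)) := by
  classical
  obtain ⟨C, hC, hgain⟩ := exists_distortion_sub_insert_le_mul_rpow_neg E hE hr hr'
  obtain ⟨C', hC', hmoment⟩ := exists_distortion_le_mul_rpow_of_forall_sub_insert_le E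
    hr hr'.le hs hs' (by positivity : 0 ≤ ((2 : ℝ) ^ r * 4) ^ r⁻¹)
  refine ⟨C' * C ^ (s / (finrank ℝ E + r)), by positivity, fun μ _ hμ hμ1 N hN Γ h => ?_⟩
  refine (hmoment μ hμ hμ1 Γ h.nonempty (h.infDist_zero_le hμ hμ1 hr hr'.le hN) _ (by positivity)
    (hgain μ hμ hμ1 N hN Γ h)).trans_eq ?_
  rw [mul_rpow hC.le (by positivity), ← rpow_mul N.cast_nonneg, mul_assoc]
  congr 3
  field_simp

lemma exists_distortion_le_of_isOptimalGrid (hE : 0 < finrank ℝ E) {r r' s : ℝ} (hr : 0 < r)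
    (hr' : r < r') (hs : 0 < s) (hs' : s < (finrank ℝ E + r) * r' / (finrank ℝ E + r')) :
    ∃ C, 0 < C ∧ ∀ (μ : Measure E) [IsProbabilityMeasure μ] (a : E) (τ : ℝ), 0 < τ →
      Integrable (fun x => ‖x - a‖ ^ r') μ → ∫ x, ‖x - a‖ ^ r' ∂μ ≤ τ ^ r' →
      ∀ N : ℕ, 1 ≤ N → ∀ Γ : Finset E, IsOptimalGrid μ r N Γ →
        distortion μ s Γ ≤ C * τ ^ s * (N : ℝ) ^ (-(s / finrank ℝ E)) := by
  classical
  obtain ⟨C, hC, hbound⟩ :=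
    exists_distortion_le_of_isOptimalGrid_of_integral_le_one E hE hr hr' hs hs'
  refine ⟨C, hC, fun μ _ a τ hτ hμ hμτ N hN Γ h => ?_⟩
  let φ : E ≃ᵐ E :=
    (MeasurableEquiv.subRight a).trans (MeasurableEquiv.smul₀ τ⁻¹ (inv_ne_zero hτ.ne'))
  have hφ (x y : E) : dist (φ x) (φ y) = τ⁻¹ * dist x y := by
    change dist (τ⁻¹ • (x - a)) (τ⁻¹ • (y - a)) = τ⁻¹ * dist x y
    rw [dist_smul₀, dist_sub_right, norm_of_nonneg (by positivity)]
  have hφnorm (x : E) : ‖φ x‖ ^ r' = (τ ^ r')⁻¹ * ‖x - a‖ ^ r' := by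
    change ‖τ⁻¹ • (x - a)‖ ^ r' = _
    rw [norm_smul, norm_of_nonneg (by positivity), mul_rpow (by positivity) (norm_nonneg _),
      inv_rpow hτ.le]
  have : IsProbabilityMeasure (μ.map φ) :=
    Measure.isProbabilityMeasure_map φ.measurable.aemeasurable
  have hφint : Integrable (fun x => ‖x‖ ^ r') (μ.map φ) := by
    rw [integrable_map_equiv]
    simpa only [Function.comp_def, hφnorm] using hμ.const_mul _
  have hφmoment : ∫ x, ‖x‖ ^ r' ∂μ.map φ ≤ 1 := by
    rw [integral_map_equiv]
    simp only [hφnorm]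
    rw [integral_const_mul, inv_mul_le_one₀ (by positivity)]
    exact hμτ
  have hτinv : 0 ≤ τ⁻¹ := by positivity
  have := hbound (μ.map φ) hφint hφmoment N hN _ (h.map_image φ hτinv hφ)
  rwa [distortion_map_image φ hτinv hφ, inv_rpow hτ.le, inv_mul_le_iff₀' (by positivity),
    mul_right_comm] at this

lemma exists_distortion_rpow_le_iInf (hE : 0 < finrank ℝ E) {r r' s : ℝ} (hr : 0 < r)
    (hr' : r < r') (hs : 0 < s) (hs' : s < (finrank ℝ E + r) * r' / (finrank ℝ E + r')) :
    ∃ K, ∀ (μ : Measure E) [IsProbabilityMeasure μ], Integrable (fun x => ‖x‖ ^ r') μ →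
      ∀ N : ℕ, 1 ≤ N → ∀ Γ : Finset E, IsOptimalGrid μ r N Γ →
        distortion μ s Γ ^ (1 / s) ≤ K * (⨅ a, (∫ x, ‖x - a‖ ^ r' ∂μ) ^ (1 / r')) *
          (N : ℝ) ^ (-(1 / finrank ℝ E) : ℝ) := by
  obtain ⟨C, hC, hbound⟩ := exists_distortion_le_of_isOptimalGrid E hE hr hr' hs hs'
  have hr'0 : 0 < r' := hr.trans hr'
  refine ⟨C ^ (1 / s), fun μ _ hμ N hN Γ h => ?_⟩
  have hinteg (a : E) : Integrable (fun x => ‖x - a‖ ^ r') μ := by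
    simpa only [Finset.coe_singleton, infDist_singleton, dist_eq_norm] using
      integrable_infDist_rpow_of_norm hr'0.le hμ {a}
  set ρ : ℝ := (N : ℝ) ^ (-(1 / finrank ℝ E) : ℝ)
  have hρ : 0 < ρ := by positivity
  rw [mul_right_comm, ← div_le_iff₀' (by positivity)]
  refine le_of_forall_gt_imp_ge_of_dense fun τ hτ => ?_
  obtain ⟨a, ha⟩ := exists_lt_of_ciInf_lt hτ
  have hmoment : 0 ≤ ∫ x, ‖x - a‖ ^ r' ∂μ := integral_nonneg fun x => by positivity
  have hτ0 : 0 < τ := (rpow_nonneg hmoment _).trans_lt ha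
  rw [one_div, rpow_inv_lt_iff_of_pos hmoment hτ0.le hr'0] at ha
  rw [div_le_iff₀' (by positivity), one_div, rpow_inv_le_iff_of_pos (distortion_nonneg Γ)
    (by positivity) hs]
  refine (hbound μ a τ hτ0 (hinteg a) ha.le N hN Γ h).trans_eq ?_
  rw [mul_rpow (by positivity) hτ0.le, mul_rpow (by positivity) hρ.le, rpow_inv_rpow hC.le hs.ne',
    ← rpow_mul N.cast_nonneg, mul_right_comm]
  congr 3
  ring

end Mismatch

lemma isOptimalGrid_map_of_quantErrRV_eq {d N : ℕ} {r : ℝ} {Ω : Type*} [MeasurableSpace Ω]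
    {P : Measure Ω} {X : Ω → Euc d} {Γ : Finset (Euc d)} (hr : 0 < r) (hX : AEMeasurable X P)
    (hΓ : Γ.Nonempty) (hcard : Γ.card ≤ N) (hopt : quantErrRV r P X Γ = optQuantErrRV r N P X) :
    IsOptimalGrid (P.map X) r N Γ where
  nonempty := hΓ
  card_le := hcard
  distortion_le Δ hΔ hΔN := by
    have hnonneg (Γ : Finset (Euc d)) : 0 ≤ ∫ ω, infDist (X ω) Γ ^ r ∂P :=
      integral_nonneg fun ω => rpow_nonneg infDist_nonneg r
    have hbdd : BddBelow {e | ∃ Γ : Finset (Euc d), Γ.Nonempty ∧ Γ.card ≤ N ∧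
        e = quantErrRV r P X Γ} := by
      refine ⟨0, ?_⟩
      rintro _ ⟨Γ, -, -, rfl⟩
      exact rpow_nonneg (hnonneg Γ) _
    have hle : quantErrRV r P X Γ ≤ quantErrRV r P X Δ :=
      hopt.trans_le (csInf_le hbdd ⟨Δ, hΔ, hΔN, rfl⟩)
    rw [distortion_map hX hr.le, distortion_map hX hr.le]
    exact (rpow_le_rpow_iff (hnonneg Γ) (hnonneg Δ) (one_div_pos.2 hr)).1 hle

theorem distortion_mismatch_general (E : Type*) [NormedAddCommGroup E] [NormedSpace ℝ E]
    [MeasurableSpace E] [BorelSpace E] [FiniteDimensional ℝ E] (hE : 0 < finrank ℝ E)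
    {r r' s : ℝ} (hr : 0 < r) (hr' : r < r') (hs : 0 < s)
    (hs' : s < (finrank ℝ E + r) * r' / (finrank ℝ E + r')) :
    ∃ K : ℝ, ∀ (Ω : Type*) [MeasurableSpace Ω] (P : Measure Ω) [IsProbabilityMeasure P]
      (X : Ω → E), AEMeasurable X P → Integrable (fun ω => ‖X ω‖ ^ r') P →
      ∀ N : ℕ, 1 ≤ N → ∀ Γ : Finset E, IsOptimalGrid (P.map X) r N Γ →
        (∫ ω, infDist (X ω) Γ ^ s ∂P) ^ (1 / s) ≤
          K * (⨅ a, (∫ ω, ‖X ω - a‖ ^ r' ∂P) ^ (1 / r')) *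
            (N : ℝ) ^ (-(1 / finrank ℝ E) : ℝ) := by
  obtain ⟨K, hK⟩ := exists_distortion_rpow_le_iInf E hE hr hr' hs hs'
  have hr'0 : 0 ≤ r' := (hr.trans hr').le
  refine ⟨K, fun Ω _ P _ X hX hinteg N hN Γ h => ?_⟩
  have : IsProbabilityMeasure (P.map X) := Measure.isProbabilityMeasure_map hX
  have hmap (a : E) : ∫ x, ‖x - a‖ ^ r' ∂P.map X = ∫ ω, ‖X ω - a‖ ^ r' ∂P :=
    integral_map hX (by fun_prop)
  have hinteg' : Integrable (fun x => ‖x‖ ^ r') (P.map X) :=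
    (integrable_map_measure (by fun_prop) hX).2 hinteg
  simpa only [distortion_map hX hs.le, hmap] using hK (P.map X) hinteg' N hN Γ h

/-- **Distortion mismatch.** Let `r > 0` and `X` an ℝ^d-valued random vector with
`E|X|^{r'} < ∞` for some `r' > r`, whose law has a non-zero absolutely continuous component
w.r.t. Lebesgue measure (i.e. is not mutually singular with it).  Let `(Γ_N)` be a sequence of
`L^r`-optimal quantizers of `X`.  Then for every `s ∈ (0, (d+r)r'/(d+r'))` there is a finite
constant `K̃_{d,r,r',s}` (depending only on `d, r, r', s`) with
`e_s(Γ_N, X) ≤ K̃ · σ_{r'}(X) · N^{−1/d}` for all `N ≥ 1`. -/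
theorem distortion_mismatch (d : ℕ) (hd : 1 ≤ d) (r r' s : ℝ) (hr : 0 < r) (hr' : r < r')
    (hs : 0 < s) (hs' : s < (d + r) * r' / (d + r')) :
    ∃ K : ℝ, ∀ (Ω : Type) (_ : MeasurableSpace Ω) (P : Measure Ω), IsProbabilityMeasure P →
      ∀ X : Ω → Euc d, Measurable X →
        Integrable (fun ω => ‖X ω‖ ^ r') P →
        ¬ (P.map X).MutuallySingular (volume : Measure (Euc d)) →
        ∀ Γ : ℕ → Finset (Euc d),
          (∀ N : ℕ, 1 ≤ N → (Γ N).Nonempty ∧ (Γ N).card ≤ N ∧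
            quantErrRV r P X (Γ N) = optQuantErrRV r N P X) →
          ∀ N : ℕ, 1 ≤ N →
            quantErrRV s P X (Γ N) ≤ K * sigmaRV r' P X * (N : ℝ) ^ (-(1 / (d : ℝ))) := by
  obtain ⟨K, hK⟩ := distortion_mismatch_general (Euc d) (by rwa [finrank_euclideanSpace_fin]) hr hr'
    hs (by rwa [finrank_euclideanSpace_fin])
  rw [finrank_euclideanSpace_fin] at hK
  exact ⟨K, fun Ω _ P _ X hX hinteg _ Γ hΓ N hN => hK Ω P X hX.aemeasurable hinteg N hN (Γ N)
    (isOptimalGrid_map_of_quantErrRV_eq hr hX.aemeasurable (hΓ N hN).1 (hΓ N hN).2.1 (hΓ N hN).2.2)⟩
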